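/- Let X = L ∪ J ∪ R be a continuum in the class 𝒞 such that L and R are nondegenerate and L ∩ R = ∅. Then 𝓜(X) ⊇ 𝓜(J) ∪ 𝓜(L) ∪ 𝓜(R); that is, every M ∈ 𝓜(J), every M ∈ 𝓜(L) and every M ∈ 𝓜(R) is a minimal set on X. Moreover, 𝓜(J) is exactly the system of all subsets of J that are nonempty finite sets or Cantor sets. -/

import Mathlib

/-!
The free interval `J` is a line `e : ℝ ≃ₜ J` that converges to `L` at `+∞` and to `R` at `-∞`
(`ClassC.exists_param`).

*The system of minimal sets of `J`.* Let `M` be minimal for a self-map `f` of a line. Every point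
of `M` is recurrent (`MinimalSystemOn.exists_return`). If `M` is infinite, it contains no periodic
point; hence it has no isolated point, as an isolated recurrent point is periodic. It is also
totally disconnected: a nondegenerate component of `M` is a compact interval, recurrence of an
interior point shows that some iterate of `f` maps it into itself, and a fixed point of that iterate
would be a periodic point. So `M` is finite or a Cantor set (`finite_or_cantor_of_mem_MSetIn`).
Conversely, a nonempty finite set carries a cyclic permutation and, by Brouwer's characterization
of the Cantor set (`nonempty_homeomorph_cantor`), every Cantor set carries a copy of the odometer
`x ↦ x + 1` on `ℤ_[2]`; both are minimal because the natural numbers are dense in `ZMod n` and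
in `ℤ_[2]`. By Tietze's theorem such a map on `M ⊆ J` extends to a continuous map `X → J`
(`exists_extension_into`), which makes `M` a minimal set both of `J` and of `X`.

*Minimal sets of `L` and `R`.* It suffices to retract `X` onto `L`, since a self-map of `L` then
extends to `X`; the case of `R` follows by reversing the line. A locally connected compactum is
uniformly locally path connected in the following form (`Coarse.exists_continuousOn`): a map of
`[0, 1]` into it all of whose jumps are small is uniformly close to a continuous map with the same
end points. It is obtained by repeatedly inserting chains that lie in small connected sets.
Applied on each `[n, n + 1]` to a nearest-point selection `ℝ → L` along the line, this gives a
curve `ρ` in `L` with `dist (ρ t) (e t) → 0` as `t → ∞` (`exists_asymptotic_curve`). The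
retraction sends `e t` to `ρ t` for large `t` and is constant on the rest of the line and
on `R` (`exists_retraction`).
-/

open Set Topology

/-- A topological space has no isolated points if no singleton is open. -/
def NoIsolatedPoints (Y : Type*) [TopologicalSpace Y] : Prop :=
  ∀ y : Y, ¬ IsOpen ({y} : Set Y)

/-- `(M, f|_M)` is a minimal dynamical system with `f(M) = M`:
`M` is nonempty, `f(M) = M`, and `M` has no nonempty proper closed subset
invariant under `f|_M`. -/
def MinimalSystemOn {Y : Type*} [TopologicalSpace Y] (f : Y → Y) (M : Set Y) : Prop :=
  M.Nonempty ∧ f '' M = M ∧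
    ∀ N, N ⊆ M → N.Nonempty → IsClosed N → f '' N ⊆ N → N = M

/-- The system `𝓜(Y)` of all compact sets `M ⊆ Y` such that there is a continuous
`f : Y → Y` with `f(M) = M` and `(M, f|_M)` a minimal dynamical system. -/
def MSpace (Y : Type*) [TopologicalSpace Y] : Set (Set Y) :=
  {M | IsCompact M ∧ ∃ f : Y → Y, Continuous f ∧ MinimalSystemOn f M}

/-- `𝓜(Z)` for a subspace `Z ⊆ X` (carrying the subspace topology),
viewed as a system of subsets of `X`. -/
def MSetIn {X : Type*} [TopologicalSpace X] (Z : Set X) : Set (Set X) :=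
  {M | ∃ M' ∈ MSpace (↥Z), M = Subtype.val '' M'}

/-- `𝓜*(L; R)`: members of `𝓜(L ∪ R)` (`= 𝓜(L ⊔ R)` for disjoint `L, R`) such that
`M ∩ L` and `M ∩ R` have the same cardinality. -/
def MStarIn {X : Type*} [TopologicalSpace X] (L R : Set X) : Set (Set X) :=
  {M | M ∈ MSetIn (L ∪ R) ∧ Cardinal.mk ↥(M ∩ L) = Cardinal.mk ↥(M ∩ R)}

/-- An arc: a set homeomorphic to `[0,1]`. -/
def IsArc {X : Type*} [TopologicalSpace X] (A : Set X) : Prop :=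
  Nonempty (↥A ≃ₜ ↥(Set.Icc (0:ℝ) 1))

/-- A ray: a set homeomorphic to `[0,∞)`. -/
def IsRaySet {X : Type*} [TopologicalSpace X] (A : Set X) : Prop :=
  Nonempty (↥A ≃ₜ ↥(Set.Ici (0:ℝ)))

/-- A Cantor set: nonempty, compact, totally disconnected, without isolated points
(metrizability is inherited from the ambient space). -/
def IsCantorSet {X : Type*} [TopologicalSpace X] (M : Set X) : Prop :=
  M.Nonempty ∧ IsCompact M ∧ IsTotallyDisconnected M ∧ NoIsolatedPoints ↥M

/-- A circle: a set homeomorphic to the unit circle `S¹ ⊆ ℂ`. -/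
def IsCircleSet {X : Type*} [TopologicalSpace X] (C : Set X) : Prop :=
  Nonempty (↥C ≃ₜ ↥(Metric.sphere (0:ℂ) 1))

/-- A cantoroid: a nonempty compact (metrizable) set without isolated points in which
the union of the degenerate (singleton) connected components is dense. -/
def IsCantoroid {X : Type*} [TopologicalSpace X] (M : Set X) : Prop :=
  M.Nonempty ∧ IsCompact M ∧ NoIsolatedPoints ↥M ∧
    Dense {x : ↥M | connectedComponent x = {x}}

/-- A union of finitely many (at least one) pairwise disjoint circles. -/
def FinUnionDisjCircles {X : Type*} [TopologicalSpace X] (M : Set X) : Prop :=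
  ∃ (n : ℕ) (C : Fin n → Set X), 0 < n ∧ (∀ i, IsCircleSet (C i)) ∧
    Pairwise (Function.onFun Disjoint C) ∧ M = ⋃ i, C i

/-- A local dendrite: a locally connected continuum containing only finitely many circles. -/
def IsLocalDendrite {X : Type*} [TopologicalSpace X] (L : Set X) : Prop :=
  IsCompact L ∧ IsConnected L ∧ LocallyConnectedSpace ↥L ∧
    {C : Set X | C ⊆ L ∧ IsCircleSet C}.Finite

/-- The decomposition `X = L ∪ J ∪ R` witnessing that the continuum `X` belongs to the
class `𝒞`: `J` is a free interval dense in `X`; `L` and `R` are locally connected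
subcontinua of `X` disjoint from `J`; and there are rays `J_L, J_R` with
`J = J_L ∪ J_R` such that `L ∪ J_L` is a compactification of `J_L` and `R ∪ J_R` is a
compactification of `J_R`. -/
structure ClassC {X : Type*} [TopologicalSpace X] (L J R : Set X) : Prop where
  union_eq : L ∪ J ∪ R = Set.univ
  openJ : IsOpen J
  freeJ : Nonempty (↥J ≃ₜ ↥(Set.Ioo (0:ℝ) 1))
  denseJ : Dense J
  compactL : IsCompact L
  connL : IsConnected L
  locConnL : LocallyConnectedSpace ↥L
  compactR : IsCompact R
  connR : IsConnected R
  locConnR : LocallyConnectedSpace ↥R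
  disjLJ : Disjoint L J
  disjRJ : Disjoint R J
  rays : ∃ JL JR : Set X, JL ∪ JR = J ∧ IsRaySet JL ∧ IsRaySet JR ∧
    IsCompact (L ∪ JL) ∧ L ∪ JL ⊆ closure JL ∧
    IsCompact (R ∪ JR) ∧ R ∪ JR ⊆ closure JR

/-! ### The characterization of the Cantor set -/

/-- Without isolated points, a nonempty clopen set splits into two nonempty clopen parts. -/
theorem exists_clopen_proper {K : Type*} [TopologicalSpace K] [CompactSpace K] [T2Space K]
    [TotallyDisconnectedSpace K] (hK : NoIsolatedPoints K) (V : Set K)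
    (hV : IsClopen V) (hne : V.Nonempty) :
    ∃ A ⊆ V, IsClopen A ∧ A.Nonempty ∧ (V \ A).Nonempty := by
  obtain ⟨x, hx⟩ := hne
  have : ∃ y ∈ V, y ≠ x := by
    by_contra! h
    refine hK x ?_
    have : ({x} : Set K) = V := by
      ext z; constructor
      · rintro rfl; exact hx
      · exact h z
    rw [this]; exact hV.isOpen
  obtain ⟨y, hy, hyx⟩ := this
  obtain ⟨O, hO, hxO, hOy⟩ := compact_exists_isClopen_in_isOpen
    (isOpen_compl_singleton (x := y)) (show x ∈ ({y} : Set K)ᶜ from fun h => hyx h.symm)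
  exact ⟨V ∩ O, inter_subset_left, hV.inter hO, ⟨x, hx, hxO⟩, ⟨y, hy, fun h => hOy h.2 rfl⟩⟩

/-- A nonempty clopen set `V` splits into two nonempty clopen parts `A` and `V \ A`, each of which is
contained in, or disjoint from, the given clopen set `U`. -/
theorem exists_clopen_split {K : Type*} [TopologicalSpace K] [CompactSpace K] [T2Space K]
    [TotallyDisconnectedSpace K] (hK : NoIsolatedPoints K) (U V : Set K) (hU : IsClopen U)
    (hV : IsClopen V) (hne : V.Nonempty) :
    ∃ A ⊆ V, IsClopen A ∧ A.Nonempty ∧ (V \ A).Nonempty ∧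
      (A = V ∩ U ∨ V ⊆ U ∨ Disjoint V U) := by
  obtain ⟨A, hAV, hA, hA1, hA2⟩ := exists_clopen_proper hK V hV hne
  by_cases h1 : (V ∩ U).Nonempty
  · by_cases h2 : (V \ U).Nonempty
    · exact ⟨V ∩ U, inter_subset_left, hV.inter hU, h1, by rwa [sdiff_self_inter], Or.inl rfl⟩
    · exact ⟨A, hAV, hA, hA1, hA2,
        Or.inr (Or.inl (sdiff_eq_empty.1 (not_nonempty_iff_eq_empty.1 h2)))⟩
  · exact ⟨A, hAV, hA, hA1, hA2, Or.inr (Or.inr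
      (disjoint_iff_inter_eq_empty.2 (not_nonempty_iff_eq_empty.1 h1)))⟩

/-- A separating sequence of clopen sets. -/
theorem exists_clopen_separating (K : Type*) [TopologicalSpace K] [CompactSpace K] [T2Space K]
    [TotallyDisconnectedSpace K] [SecondCountableTopology K] :
    ∃ U : ℕ → Set K, (∀ n, IsClopen (U n)) ∧ ∀ x y, x ≠ y → ∃ n, x ∈ U n ∧ y ∉ U n := by
  obtain ⟨B, hBs, hBc, hB⟩ := (isTopologicalBasis_isClopen (X := K)).exists_countable
  have hc : (insert ∅ B).Countable := hBc.insert _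
  obtain ⟨U, hU⟩ := hc.exists_eq_range ⟨∅, mem_insert _ _⟩
  refine ⟨U, fun n => ?_, fun x y hxy => ?_⟩
  · have : U n ∈ insert ∅ B := hU ▸ mem_range_self n
    rcases this with h | h
    · rw [h]; exact isClopen_empty
    · exact hBs h
  · obtain ⟨O, hO, hxO, hOy⟩ := hB.exists_subset_of_mem_open
      (show x ∈ ({y} : Set K)ᶜ from hxy) isOpen_compl_singleton
    have : O ∈ range U := hU ▸ mem_insert_of_mem _ hO
    obtain ⟨n, rfl⟩ := this
    exact ⟨n, hxO, fun h => hOy h rfl⟩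

/-- Brouwer's characterization of the Cantor space. A clopen partition tree is built in which the
`n`-th splitting is made compatible with the `n`-th member of a separating sequence of clopen sets;
its branches are then in bijection with the points. -/
theorem nonempty_homeomorph_cantor (K : Type*) [TopologicalSpace K] [CompactSpace K] [T2Space K]
    [TotallyDisconnectedSpace K] [SecondCountableTopology K] [Nonempty K]
    (hK : NoIsolatedPoints K) : Nonempty ((ℕ → Bool) ≃ₜ K) := by
  classical
  obtain ⟨U, hU, hsep⟩ := exists_clopen_separating K
  let P := {V : Set K // IsClopen V ∧ V.Nonempty}
  have hsplit : ∀ (n : ℕ) (V : P), ∃ A : Set K, A ⊆ V.1 ∧ IsClopen A ∧ A.Nonempty ∧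
      (V.1 \ A).Nonempty ∧ (A = V.1 ∩ U n ∨ V.1 ⊆ U n ∨ Disjoint V.1 (U n)) :=
    fun n V => exists_clopen_split hK (U n) V.1 (hU n) V.2.1 V.2.2
  choose A hAV hAc hAne hAne' hAU using hsplit
  let child : ℕ → P → Bool → P := fun n V b =>
    if b then ⟨A n V, hAc n V, hAne n V⟩ else ⟨V.1 \ A n V, V.2.1.diff (hAc n V), hAne' n V⟩
  have child_t : ∀ n V, (child n V true).1 = A n V := fun n V => rfl
  have child_f : ∀ n V, (child n V false).1 = V.1 \ A n V := fun n V => rfl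
  let T : (ℕ → Bool) → ℕ → P := fun α n =>
    Nat.rec ⟨univ, isClopen_univ, univ_nonempty⟩ (fun n V => child n V (α n)) n
  have T0 : ∀ α, (T α 0).1 = univ := fun α => rfl
  have Ts : ∀ α n, T α (n + 1) = child n (T α n) (α n) := fun α n => rfl
  have hanti : ∀ α, Antitone fun n => (T α n).1 := by
    intro α
    refine antitone_nat_of_succ_le fun n => ?_
    change (T α (n+1)).1 ⊆ (T α n).1
    rw [Ts]
    cases α n
    · rw [child_f]; exact sdiff_subset
    · rw [child_t]; exact hAV _ _
  have hloc : ∀ α β n, (∀ i < n, β i = α i) → T β n = T α n := by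
    intro α β n
    induction n with
    | zero => intro _; rfl
    | succ n ih =>
      intro h
      rw [Ts, Ts, ih fun i hi => h i (by omega), h n (by omega)]
  have huniq : ∀ α x y, (∀ n, x ∈ (T α n).1) → (∀ n, y ∈ (T α n).1) → x = y := by
    intro α x y hx hy
    by_contra hxy
    obtain ⟨n, hxn, hyn⟩ := hsep x y hxy
    have hx1 := hx (n + 1)
    have hy1 := hy (n + 1)
    rw [Ts] at hx1 hy1
    rcases hAU n (T α n) with h | h | h
    · cases hα : α n
      · rw [hα, child_f, h] at hx1
        exact hx1.2 ⟨hx n, hxn⟩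
      · rw [hα, child_t, h] at hy1
        exact hyn hy1.2
    · exact hyn (h (hy n))
    · exact Set.disjoint_left.1 h (hx n) hxn
  have hex : ∀ α, ∃ x, ∀ n, x ∈ (T α n).1 := by
    intro α
    have := IsCompact.nonempty_iInter_of_sequence_nonempty_isCompact_isClosed
      (fun n => (T α n).1) (fun n => hanti α (Nat.le_succ n)) (fun n => (T α n).2.2)
      (T α 0).2.1.isClosed.isCompact (fun n => (T α n).2.1.isClosed)
    obtain ⟨x, hx⟩ := this
    exact ⟨x, fun n => mem_iInter.1 hx n⟩
  choose Φ hΦ using hex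
  have hinj : Function.Injective Φ := by
    intro α β hαβ
    by_contra hne
    have hd : ∃ n, α n ≠ β n := by
      by_contra! h; exact hne (funext h)
    have hfirst : ∀ i < Nat.find hd, β i = α i := fun i hi => by
      have := Nat.find_min hd hi
      push Not at this
      exact this.symm
    have hn := Nat.find_spec hd
    set n := Nat.find hd
    have h1 := hΦ α (n + 1)
    have h2 := hΦ β (n + 1)
    rw [← hαβ, Ts, hloc α β n hfirst] at h2
    rw [Ts] at h1
    cases ha : α n <;> cases hb : β n
    · exact hn (ha.trans hb.symm)
    · rw [ha, child_f] at h1; rw [hb, child_t] at h2; exact h1.2 h2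
    · rw [ha, child_t] at h1; rw [hb, child_f] at h2; exact h2.2 h1
    · exact hn (ha.trans hb.symm)
  have hsurj : Function.Surjective Φ := by
    intro x
    let W : ℕ → P := fun n =>
      Nat.rec ⟨univ, isClopen_univ, univ_nonempty⟩
        (fun n V => child n V (decide (x ∈ A n V))) n
    let α : ℕ → Bool := fun n => decide (x ∈ A n (W n))
    have hW : ∀ n, T α n = W n := by
      intro n
      induction n with
      | zero => rfl
      | succ n ih =>
        rw [Ts, ih]
    have hxW : ∀ n, x ∈ (W n).1 := by
      intro n
      induction n with
      | zero => exact mem_univ x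
      | succ n ih =>
        change x ∈ (child n (W n) (decide (x ∈ A n (W n)))).1
        by_cases h : x ∈ A n (W n)
        · rw [decide_eq_true h, child_t]; exact h
        · rw [decide_eq_false h, child_f]; exact ⟨ih, h⟩
    exact ⟨α, huniq α _ _ (hΦ α) fun n => by rw [hW]; exact hxW n⟩
  have hcont : Continuous Φ := by
    rw [continuous_iff_continuousAt]
    intro α
    rw [ContinuousAt, Filter.tendsto_def]
    intro O hO
    obtain ⟨n, hn⟩ := exists_subset_nhds_of_compactSpace (V := fun n => (T α n).1)
      (hanti α).directed_ge (fun n => (T α n).2.1.isClosed) (U := O) (fun x hx => by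
        rw [huniq α x (Φ α) (fun n => mem_iInter.1 hx n) (hΦ α)]; exact hO)
    refine Filter.mem_of_superset ((PiNat.isOpen_cylinder (fun _ => Bool) α n).mem_nhds
      (PiNat.self_mem_cylinder α n)) fun β hβ => ?_
    have := hΦ β n
    rw [hloc α β n hβ] at this
    exact hn this
  exact ⟨hcont.homeoOfEquivCompactToT2 (f := Equiv.ofBijective Φ ⟨hinj, hsurj⟩)⟩

/-! ### Minimal maps on finite sets and Cantor sets -/

/-- The space `K` carries a continuous surjective self-map without proper nonempty closed
invariant subsets. -/
def HasMinimalMap (K : Type*) [TopologicalSpace K] : Prop :=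
  ∃ g : K → K, Continuous g ∧ Function.Surjective g ∧
    ∀ N : Set K, N.Nonempty → IsClosed N → g '' N ⊆ N → N = univ

theorem HasMinimalMap.of_homeomorph {K K' : Type*} [TopologicalSpace K] [TopologicalSpace K']
    (h : K ≃ₜ K') (hK : HasMinimalMap K) : HasMinimalMap K' := by
  obtain ⟨g, hg, hs, hm⟩ := hK
  refine ⟨fun x => h (g (h.symm x)), by fun_prop, h.surjective.comp (hs.comp h.symm.surjective),
    fun N hN hNc hNi => ?_⟩
  have := hm (h ⁻¹' N) ?_ (hNc.preimage h.continuous) ?_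
  · rw [← h.image_preimage N, this, image_univ, h.surjective.range_eq]
  · obtain ⟨x, hx⟩ := hN
    exact ⟨h.symm x, by simpa using hx⟩
  · rintro _ ⟨x, hx, rfl⟩
    exact hNi ⟨h x, hx, by simp⟩

/-- Translation by `1` is minimal on a topological ring in which the natural numbers are dense. -/
theorem hasMinimalMap_of_denseRange_natCast (G : Type*) [Ring G] [TopologicalSpace G]
    [IsTopologicalRing G] (hd : DenseRange (Nat.cast : ℕ → G)) : HasMinimalMap G := by
  refine ⟨fun x => x + 1, by fun_prop, fun x => ⟨x - 1, by simp⟩, fun N hN hNc hNi => ?_⟩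
  obtain ⟨x, hx⟩ := hN
  have hn : ∀ n : ℕ, x + n ∈ N := by
    intro n
    induction n with
    | zero => simpa using hx
    | succ n ih =>
      have := hNi ⟨_, ih, rfl⟩
      simpa [add_assoc] using this
  have hdx : DenseRange (fun n : ℕ => x + (n : G)) :=
    (Homeomorph.addLeft x).surjective.denseRange.comp hd (Homeomorph.addLeft x).continuous
  rw [eq_univ_iff_forall]
  intro y
  have : closure (range fun n : ℕ => x + (n : G)) ⊆ N :=
    hNc.closure_subset_iff.2 (by rintro _ ⟨n, rfl⟩; exact hn n)
  exact this (hdx y)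

theorem hasMinimalMap_of_finite (K : Type*) [TopologicalSpace K] [T1Space K] [Finite K]
    [Nonempty K] : HasMinimalMap K := by
  have : NeZero (Nat.card K) := ⟨Nat.card_pos.ne'⟩
  obtain ⟨e⟩ : Nonempty (ZMod (Nat.card K) ≃ K) := Finite.card_eq.1 (Nat.card_zmod _)
  refine HasMinimalMap.of_homeomorph (K := ZMod (Nat.card K))
    (Homeomorph.ofDiscrete e) ?_
  refine hasMinimalMap_of_denseRange_natCast _ ?_
  exact (ZMod.natCast_zmod_surjective).denseRange

/-- The `2`-adic odometer transfers to every Cantor set. -/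
theorem hasMinimalMap_of_cantor (K : Type*) [TopologicalSpace K] [CompactSpace K] [T2Space K]
    [TotallyDisconnectedSpace K] [SecondCountableTopology K] [Nonempty K]
    (hK : NoIsolatedPoints K) : HasMinimalMap K := by
  -- `y` is the limit of the points `y + 2 ^ n ≠ y`
  have hiso : NoIsolatedPoints ℤ_[2] := by
    intro y hy
    have h0 : Filter.Tendsto (fun n : ℕ => y + (2 : ℤ_[2]) ^ n) Filter.atTop (𝓝 (y + 0)) :=
      tendsto_const_nhds.add (tendsto_pow_atTop_nhds_zero_of_norm_lt_one
        (by rw [show (2 : ℤ_[2]) = ((2 : ℕ) : ℤ_[2]) by norm_num, PadicInt.norm_p]; norm_num))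
    rw [add_zero] at h0
    obtain ⟨n, hn⟩ := (h0.eventually (hy.mem_nhds rfl)).exists
    have : (2 : ℤ_[2]) ^ n = 0 := by
      exact add_eq_left.1 hn
    exact two_ne_zero (eq_zero_of_pow_eq_zero this)
  obtain ⟨e1⟩ := nonempty_homeomorph_cantor ℤ_[2] hiso
  obtain ⟨e2⟩ := nonempty_homeomorph_cantor K hK
  exact HasMinimalMap.of_homeomorph (e1.symm.trans e2)
    (hasMinimalMap_of_denseRange_natCast _ PadicInt.denseRange_natCast)

/-- The image of a minimal system under an injective continuous semiconjugacy is minimal. -/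
theorem MinimalSystemOn.image {Z X : Type*} [TopologicalSpace Z] [TopologicalSpace X] {i : Z → X}
    (hi : Continuous i) (hinj : Function.Injective i) {f : Z → Z} {F : X → X}
    (hF : ∀ z, F (i z) = i (f z)) {M : Set Z} (hM : MinimalSystemOn f M) :
    MinimalSystemOn F (i '' M) := by
  obtain ⟨hne, him, hmin⟩ := hM
  refine ⟨hne.image i, ?_, fun N hNM hN hNc hNi => ?_⟩
  · rw [image_image]
    simp only [hF]
    conv_rhs => rw [← him]
    rw [image_image]
  · have hN' : i '' (i ⁻¹' N) = N :=
      image_preimage_eq_of_subset (hNM.trans (image_subset_range _ _))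
    rw [← hN', hmin (i ⁻¹' N) ?_ ?_ (hNc.preimage hi) ?_]
    · intro z hz
      obtain ⟨w, hw, hwz⟩ := hNM hz
      exact hinj hwz ▸ hw
    · rw [← hN'] at hN; exact hN.of_image
    · rintro _ ⟨z, hz, rfl⟩
      change i (f z) ∈ N
      rw [← hF]; exact hNi ⟨_, hz, rfl⟩

theorem hasMinimalMap_coe {X : Type*} [TopologicalSpace X] [TopologicalSpace.MetrizableSpace X]
    {M : Set X} (h : (M.Finite ∧ M.Nonempty) ∨ IsCantorSet M) : HasMinimalMap M := by
  rcases h with ⟨hf, hne⟩ | ⟨hne, hc, htd, hiso⟩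
  · have := hf.to_subtype
    have := hne.to_subtype
    exact hasMinimalMap_of_finite M
  · have := hne.to_subtype
    have := isCompact_iff_compactSpace.1 hc
    have : TotallyDisconnectedSpace M := totallyDisconnectedSpace_subtype_iff.2 htd
    let _ := TopologicalSpace.metrizableSpaceMetric X
    have : SecondCountableTopology M := inferInstance
    exact hasMinimalMap_of_cantor M hiso

/-- A compact subset of the free interval `J` that carries a minimal map is a minimal set for a
self-map of the ambient space with values in `J`, because `J ≃ₜ ℝ` is an absolute extensor. -/
theorem exists_extension_into {X : Type*} [TopologicalSpace X] [NormalSpace X] [T2Space X]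
    {J M : Set X} (hJ : Nonempty (ℝ ≃ₜ J)) (hMJ : M ⊆ J) (hM : IsCompact M)
    (hmin : HasMinimalMap M) (hne : M.Nonempty) :
    ∃ F : X → J, Continuous F ∧ MinimalSystemOn (fun x => (F x : X)) M := by
  obtain ⟨e⟩ := hJ
  obtain ⟨g, hg, hs, hm⟩ := hmin
  let g' : C(M, J) := ⟨fun x => inclusion hMJ (g x), (continuous_inclusion hMJ).comp hg⟩
  have : TietzeExtension J := TietzeExtension.of_homeo e.symm
  obtain ⟨F, hF⟩ := ContinuousMap.exists_restrict_eq hM.isClosed g'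
  have hF' : ∀ x : M, (F x : X) = g x := fun x => by
    have := congrArg Subtype.val (DFunLike.congr_fun hF x)
    exact this
  refine ⟨F, F.continuous, ?_⟩
  have h1 : MinimalSystemOn g univ := by
    have := hne.to_subtype
    exact ⟨univ_nonempty, by rw [image_univ, hs.range_eq], fun N _ hN hNc hNi => hm N hN hNc hNi⟩
  have := h1.image continuous_subtype_val Subtype.val_injective (F := fun x => (F x : X)) hF'
  rwa [image_univ, Subtype.range_coe] at this

/-! ### Minimal sets of maps of the line -/

section Converse

variable {Y : Type*} [TopologicalSpace Y] {f : Y → Y} {M : Set Y}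

theorem MinimalSystemOn.mapsTo (hM : MinimalSystemOn f M) : MapsTo f M M :=
  mapsTo_iff_image_subset.2 hM.2.1.subset

variable [T2Space Y]

/-- Every point of a minimal set is recurrent. -/
theorem MinimalSystemOn.exists_return (hf : Continuous f) (hMc : IsCompact M)
    (hM : MinimalSystemOn f M) {z : Y} (hz : z ∈ M) {W : Set Y} (hW : IsOpen W) (hzW : z ∈ W) :
    ∃ n, 0 < n ∧ f^[n] z ∈ W := by
  have hit : ∀ n, f^[n] z ∈ M := fun n => hM.mapsTo.iterate n hz
  have hN := hM.2.2 (closure (range fun n => f^[n + 1] z)) ?_ ?_ isClosed_closure ?_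
  · rw [← hN] at hz
    obtain ⟨_, hW', n, rfl⟩ := mem_closure_iff.1 hz W hW hzW
    exact ⟨n + 1, n.succ_pos, hW'⟩
  · exact closure_minimal (by rintro _ ⟨n, rfl⟩; exact hit _) hMc.isClosed
  · exact (range_nonempty _).closure
  · refine (image_closure_subset_closure_image hf).trans (closure_mono ?_)
    rintro _ ⟨_, ⟨n, rfl⟩, rfl⟩
    exact ⟨n + 1, Function.iterate_succ_apply' f (n + 1) z⟩

/-- A minimal set containing a periodic point is a periodic orbit. -/
theorem MinimalSystemOn.finite_of_periodic (hM : MinimalSystemOn f M) {w : Y} (hw : w ∈ M) {n : ℕ}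
    (hn : 0 < n) (hp : f^[n] w = w) : M.Finite := by
  have hfin : (range fun k => f^[k] w).Finite := by
    refine ((Finset.range n).finite_toSet.image fun k => f^[k] w).subset ?_
    rintro _ ⟨k, rfl⟩
    refine ⟨k % n, by simpa using Nat.mod_lt k hn, ?_⟩
    exact Function.IsPeriodicPt.iterate_mod_apply hp k
  rw [← hM.2.2 _ ?_ (range_nonempty fun k => f^[k] w) hfin.isClosed ?_]
  · exact hfin
  · rintro _ ⟨k, rfl⟩
    exact hM.mapsTo.iterate k hw
  · rintro _ ⟨_, ⟨k, rfl⟩, rfl⟩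
    exact ⟨k + 1, Function.iterate_succ_apply' f k w⟩

/-- An infinite minimal set has no isolated point, since an isolated recurrent point is
periodic. -/
theorem MinimalSystemOn.noIsolatedPoints (hf : Continuous f) (hMc : IsCompact M)
    (hM : MinimalSystemOn f M) (hinf : M.Infinite) : NoIsolatedPoints M := by
  intro y hy
  obtain ⟨W, hW, hWy⟩ := isOpen_induced_iff.1 hy
  have hyW : (y : Y) ∈ W := by
    have : y ∈ Subtype.val ⁻¹' W := by rw [hWy]; rfl
    exact this
  obtain ⟨n, hn, hnW⟩ := hM.exists_return hf hMc y.2 hW hyW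
  have : (⟨f^[n] y, hM.mapsTo.iterate n y.2⟩ : M) ∈ Subtype.val ⁻¹' W := hnW
  rw [hWy] at this
  exact hinf (hM.finite_of_periodic y.2 hn (congrArg Subtype.val this))

/-- A nondegenerate component of a minimal set in the line would be mapped into itself by an
iterate of the map, which produces a periodic point. -/
theorem MinimalSystemOn.isTotallyDisconnected (e : ℝ ≃ₜ Y) (hf : Continuous f) (hMc : IsCompact M)
    (hM : MinimalSystemOn f M) (hinf : M.Infinite) : IsTotallyDisconnected M := by
  intro C hCM hC x hx y hy
  by_contra hxy
  set K := connectedComponentIn M x with hK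
  have hKM : K ⊆ M := connectedComponentIn_subset M x
  have hCK : C ⊆ K := hC.subset_connectedComponentIn hx hCM
  have hKp : IsPreconnected K := isPreconnected_connectedComponentIn
  have hKc : IsCompact K := by
    have h1 : closure K ⊆ K := by
      refine hKp.closure.subset_connectedComponentIn (subset_closure (hCK hx)) ?_
      exact closure_minimal hKM hMc.isClosed
    exact hMc.of_isClosed_subset (closure_eq_iff_isClosed.1 (h1.antisymm subset_closure)) hKM
  -- the component in the coordinate of the line
  set I := e ⁻¹' K with hI
  have hIe : I = e.symm '' K := (e.symm.image_eq_preimage_symm K).symm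
  have hIp : IsPreconnected I := by
    rw [hIe]; exact hKp.image _ e.symm.continuous.continuousOn
  have hIc : IsCompact I := by rw [hIe]; exact hKc.image e.symm.continuous
  have hIne : I.Nonempty := ⟨e.symm x, by simpa [hI] using hCK hx⟩
  have hIcc : I = Icc (sInf I) (sSup I) := eq_Icc_of_connected_compact ⟨hIne, hIp⟩ hIc
  have hle : sInf I ≤ sSup I := by
    rw [hIcc] at hIne; exact nonempty_Icc.1 hIne
  have hlt : sInf I < sSup I := by
    refine lt_of_le_of_ne hle fun h => hxy ?_
    have hx' : e.symm x ∈ I := by simpa [hI] using hCK hx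
    have hy' : e.symm y ∈ I := by simpa [hI] using hCK hy
    rw [hIcc, h, Icc_self] at hx' hy'
    exact e.symm.injective (hx'.trans hy'.symm)
  obtain ⟨t, ht⟩ := nonempty_Ioo.2 hlt
  have hsub : e '' Ioo (sInf I) (sSup I) ⊆ K := by
    rintro _ ⟨s, hs, rfl⟩
    have : s ∈ I := by rw [hIcc]; exact Ioo_subset_Icc_self hs
    exact this
  obtain ⟨n, hn, hnW⟩ := hM.exists_return hf hMc (hKM (hsub ⟨t, ht, rfl⟩))
    (e.isOpenMap _ isOpen_Ioo) ⟨t, ht, rfl⟩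
  have hfn : Continuous f^[n] := hf.iterate n
  have hmaps : MapsTo f^[n] K K := by
    rw [mapsTo_iff_image_subset]
    have hKz : K = connectedComponentIn M (f^[n] (e t)) := connectedComponentIn_eq (hsub hnW)
    refine ((hKp.image _ hfn.continuousOn).subset_connectedComponentIn
      ⟨_, hsub ⟨t, ht, rfl⟩, rfl⟩ ?_).trans hKz.symm.subset
    rintro _ ⟨w, hw, rfl⟩
    exact hM.mapsTo.iterate n (hKM hw)
  obtain ⟨c, hc, hfix⟩ := exists_mem_Icc_isFixedPt_of_mapsTo (a := sInf I) (b := sSup I)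
    (f := fun s => e.symm (f^[n] (e s))) (by fun_prop) hle (by
      rw [← hIcc]
      intro s hs
      change e (e.symm _) ∈ K
      rw [e.apply_symm_apply]
      exact hmaps hs)
  rw [← hIcc] at hc
  refine hinf (hM.finite_of_periodic (hKM hc) hn ?_)
  exact e.symm_apply_eq.1 hfix

end Converse

theorem finite_or_cantor_of_mem_MSetIn {X : Type*} [TopologicalSpace X] [T2Space X] {J M : Set X}
    (hJ : Nonempty (ℝ ≃ₜ J)) (hM : M ∈ MSetIn J) :
    M ⊆ J ∧ ((M.Finite ∧ M.Nonempty) ∨ IsCantorSet M) := by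
  obtain ⟨e⟩ := hJ
  obtain ⟨M', ⟨hMc, f, hf, hmin⟩, rfl⟩ := hM
  refine ⟨by rintro _ ⟨x, -, rfl⟩; exact x.2, ?_⟩
  by_cases hfin : M'.Finite
  · exact Or.inl ⟨hfin.image _, hmin.1.image _⟩
  · have hemb : IsEmbedding (Subtype.val : J → X) := IsEmbedding.subtypeVal
    refine Or.inr ⟨hmin.1.image _, hMc.image continuous_subtype_val,
      hemb.isTotallyDisconnected_image.2 (hmin.isTotallyDisconnected e hf hMc hfin), ?_⟩
    intro y hy
    have h := hmin.noIsolatedPoints hf hMc hfin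
    let φ := hemb.homeomorphImage M'
    refine h (φ.symm y) ?_
    have := hy.preimage φ.continuous
    convert this
    ext z
    simp [Homeomorph.eq_symm_apply, φ]

/-! ### Local path connectedness of locally connected compacta -/

section Paths

variable {A : Type*} [MetricSpace A]

/-- A locally connected compactum is uniformly locally connected: close points lie in a common small
connected set. -/
theorem exists_small_preconnected [CompactSpace A] [LocallyConnectedSpace A] {ε : ℝ} (hε : 0 < ε) :
    ∃ δ > 0, ∀ p q : A, dist p q < δ →
      ∃ C : Set A, IsPreconnected C ∧ p ∈ C ∧ q ∈ C ∧ C ⊆ Metric.ball p ε := by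
  let V : A → Set A := fun x => connectedComponentIn (Metric.ball x (ε / 2)) x
  have hV : ∀ x, x ∈ V x := fun x => mem_connectedComponentIn (Metric.mem_ball_self (by positivity))
  obtain ⟨δ, hδ, h⟩ := lebesgue_number_lemma_of_metric (s := (univ : Set A)) (c := V) isCompact_univ
    (fun x => Metric.isOpen_ball.connectedComponentIn) (fun x _ => mem_iUnion.2 ⟨x, hV x⟩)
  refine ⟨δ, hδ, fun p q hpq => ?_⟩
  obtain ⟨i, hi⟩ := h p (mem_univ p)
  have hp : p ∈ V i := hi (Metric.mem_ball_self hδ)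
  refine ⟨V i, isPreconnected_connectedComponentIn, hp,
    hi (by rwa [Metric.mem_ball, dist_comm]), fun z hz => ?_⟩
  have h1 : dist z i < ε / 2 := Metric.mem_ball.1 (connectedComponentIn_subset _ _ hz)
  have h2 : dist p i < ε / 2 := Metric.mem_ball.1 (connectedComponentIn_subset _ _ hp)
  rw [Metric.mem_ball]
  linarith [dist_triangle_right z p i]

/-- Two points of a connected set are joined by a chain in it with arbitrarily short steps, encoded
as an eventually constant sequence. -/
theorem exists_chain {C : Set A} (hC : IsPreconnected C) {p q : A} (hp : p ∈ C) (hq : q ∈ C)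
    {η : ℝ} (hη : 0 < η) :
    ∃ (m : ℕ) (c : ℕ → A), c 0 = p ∧ (∀ i ≥ m, c i = q) ∧ (∀ i, c i ∈ C) ∧
      ∀ i, dist (c i) (c (i + 1)) < η := by
  let r : A → A → Prop := fun a b => a ∈ C ∧ b ∈ C ∧ dist a b < η
  have hr : Relation.ReflTransGen r p q := by
    refine hC.induction₂ (Relation.ReflTransGen r) ?_ ?_ ?_ hp hq
    · intro x hx
      filter_upwards [self_mem_nhdsWithin,
        mem_nhdsWithin_of_mem_nhds (Metric.ball_mem_nhds x hη)] with y hy hyx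
      exact Relation.ReflTransGen.single ⟨hx, hy, by rwa [dist_comm]⟩
    · intro x y z _ _ _ h1 h2
      exact h1.trans h2
    · intro x y _ _ h
      have hs : Std.Symm r := ⟨fun a b ⟨h1, h2, h3⟩ => ⟨h2, h1, by rwa [dist_comm]⟩⟩
      exact Std.Symm.symm (r := Relation.ReflTransGen r) _ _ h
  clear hp
  induction hr using Relation.ReflTransGen.head_induction_on with
  | refl => exact ⟨0, fun _ => q, rfl, fun _ _ => rfl, fun _ => hq, fun _ => by simpa using hη⟩
  | @head a b hab _ ih =>
    obtain ⟨m, c, h0, hm, hCc, hd⟩ := ih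
    refine ⟨m + 1, fun i => Nat.casesOn i a c, rfl, ?_, ?_, ?_⟩
    · intro i hi
      obtain ⟨j, rfl⟩ : ∃ j, i = j + 1 := ⟨i - 1, by omega⟩
      exact hm j (by omega)
    · rintro (_ | i)
      · exact hab.1
      · exact hCc i
    · rintro (_ | i)
      · change dist a (c 0) < η
        rw [h0]; exact hab.2.2
      · exact hd i

/-- A function is `δ`-coarsely continuous on `[0,1]` if its values at any two sufficiently close
points are less than `δ` apart. -/
def Coarse (δ : ℝ) (f : ℝ → A) : Prop :=
  ∃ η > 0, ∀ s ∈ Icc (0 : ℝ) 1, ∀ t ∈ Icc (0 : ℝ) 1, |s - t| < η → dist (f s) (f t) < δ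

/-- One refinement step: a coarsely continuous function is approximated by one that is arbitrarily
more nearly continuous, by inserting chains lying in small connected sets. -/
theorem Coarse.refine_step [CompactSpace A] [LocallyConnectedSpace A] {ε : ℝ} (hε : 0 < ε) :
    ∃ δ > 0, δ ≤ ε ∧ ∀ δ' > 0, ∀ f : ℝ → A, Coarse δ f → ∃ f' : ℝ → A, Coarse δ' f' ∧
      f' 0 = f 0 ∧ f' 1 = f 1 ∧ ∀ t ∈ Icc (0 : ℝ) 1, dist (f' t) (f t) < ε := by
  obtain ⟨δ₀, hδ₀, hsm⟩ := exists_small_preconnected (A := A) (half_pos hε)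
  refine ⟨min δ₀ (ε / 2), lt_min hδ₀ (half_pos hε), (min_le_right _ _).trans (by linarith), ?_⟩
  rintro δ' hδ' f ⟨η, hη, hf⟩
  obtain ⟨N', hN'⟩ := exists_nat_one_div_lt hη
  set N := N' + 1 with hNdef
  have hN : (1 : ℝ) / N < η := by rw [hNdef]; push_cast; exact hN'
  have hNpos : (0 : ℝ) < N := by rw [hNdef]; positivity
  have hgrid : ∀ i : ℕ, i ≤ N → (i : ℝ) / N ∈ Icc (0 : ℝ) 1 := fun i hi =>
    ⟨by positivity, by rw [div_le_one hNpos]; exact_mod_cast hi⟩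
  have hch : ∀ i : ℕ, ∃ (m : ℕ) (c : ℕ → A), c 0 = f (i / N) ∧
      (∀ j, dist (c j) (f (i / N)) < ε / 2) ∧
      (i < N → (∀ j ≥ m, c j = f ((i + 1 : ℕ) / N)) ∧ ∀ j, dist (c j) (c (j + 1)) < δ') := by
    intro i
    by_cases hi : i < N
    · have hd : dist (f (i / N)) (f ((i + 1 : ℕ) / N)) < δ₀ := by
        refine (hf _ (hgrid i hi.le) _ (hgrid (i + 1) hi) ?_).trans_le (min_le_left _ _)
        have : (i : ℝ) / N - (i + 1 : ℕ) / N = -(1 / N) := by push_cast; ring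
        rw [this, abs_neg, abs_of_nonneg (by positivity)]
        exact hN
      obtain ⟨C, hC, hp, hq, hCb⟩ := hsm _ _ hd
      obtain ⟨m, c, h0, hm, hcC, hcd⟩ := exists_chain hC hp hq hδ'
      exact ⟨m, c, h0, fun j => hCb (hcC j), fun _ => ⟨hm, hcd⟩⟩
    · exact ⟨0, fun _ => f (i / N), rfl, fun _ => by simpa using half_pos hε, fun h => absurd h hi⟩
  choose μ c hc0 hcb hcN using hch
  -- a common length for the chains; the summand `1` keeps it positive
  set m := 1 + ∑ i ∈ Finset.range N, μ i with hmdef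
  have hmpos : 0 < m := by omega
  have hmμ : ∀ i < N, μ i ≤ m := fun i hi => by
    have := Finset.single_le_sum (f := μ) (fun _ _ => Nat.zero_le _) (Finset.mem_range.2 hi)
    omega
  have hmR : (0 : ℝ) < m := by exact_mod_cast hmpos
  let F : ℕ → A := fun k => c (k / m) (k % m)
  have hFs : ∀ k < N * m, dist (F k) (F (k + 1)) < δ' := by
    intro k hk
    have hi : k / m < N := (Nat.div_lt_iff_lt_mul hmpos).2 hk
    obtain ⟨hend, hstep⟩ := hcN _ hi
    by_cases hj : k % m + 1 < m
    · have h1 : (k + 1) / m = k / m := by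
        rw [Nat.succ_div_of_not_dvd]
        intro hd
        have := Nat.mod_add_div k m
        have h3 : (k % m + 1) % m = 0 := by
          rw [Nat.mod_add_mod]; exact Nat.mod_eq_zero_of_dvd hd
        rw [Nat.mod_eq_of_lt hj] at h3
        omega
      have h2 : (k + 1) % m = k % m + 1 := by
        rw [← Nat.mod_add_mod, Nat.mod_eq_of_lt hj]
      simp only [F, h1, h2]
      exact hstep _
    · have hj' : k % m + 1 = m := by have := Nat.mod_lt k hmpos; omega
      have hk1 : k + 1 = m * (k / m + 1) := by
        have := Nat.mod_add_div k m
        rw [mul_add]; omega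
      have h1 : (k + 1) / m = k / m + 1 := by rw [hk1, Nat.mul_div_cancel_left _ hmpos]
      have h2 : (k + 1) % m = 0 := by rw [hk1, Nat.mul_mod_right]
      have h3 := hstep (k % m)
      rw [hj', hend m (hmμ _ hi)] at h3
      simp only [F, h1, h2, hc0]
      exact h3
  refine ⟨fun t => F ⌊t * (N * m : ℕ)⌋₊, ⟨1 / (N * m : ℕ), by positivity, ?_⟩, ?_, ?_, ?_⟩
  · have key : ∀ s ∈ Icc (0 : ℝ) 1, ∀ t ∈ Icc (0 : ℝ) 1, s ≤ t → t - s < 1 / (N * m : ℕ) →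
        dist (F ⌊s * (N * m : ℕ)⌋₊) (F ⌊t * (N * m : ℕ)⌋₊) < δ' := by
      intro s hs t ht hst hlt
      have hP : (0 : ℝ) < (N * m : ℕ) := by push_cast; positivity
      rw [lt_div_iff₀ hP] at hlt
      have h1 : ⌊s * (N * m : ℕ)⌋₊ ≤ ⌊t * (N * m : ℕ)⌋₊ := Nat.floor_mono (by gcongr)
      have h2 : ⌊t * (N * m : ℕ)⌋₊ ≤ ⌊s * (N * m : ℕ)⌋₊ + 1 := by
        rw [← Nat.floor_add_one (mul_nonneg hs.1 hP.le)]
        exact Nat.floor_mono (by linarith)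
      have h3 : ⌊t * (N * m : ℕ)⌋₊ ≤ N * m :=
        Nat.floor_le_of_le (by nlinarith [ht.2])
      rcases Nat.lt_or_ge ⌊s * (N * m : ℕ)⌋₊ ⌊t * (N * m : ℕ)⌋₊ with h | h
      · have h4 : ⌊t * (N * m : ℕ)⌋₊ = ⌊s * (N * m : ℕ)⌋₊ + 1 := by omega
        rw [h4]; exact hFs _ (by omega)
      · have h4 : ⌊t * (N * m : ℕ)⌋₊ = ⌊s * (N * m : ℕ)⌋₊ := by omega
        rw [h4, dist_self]; exact hδ'
    intro s hs t ht hst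
    rcases le_total s t with h | h
    · exact key s hs t ht h (by rwa [abs_sub_comm, abs_of_nonneg (by linarith)] at hst)
    · rw [dist_comm]
      exact key t ht s hs h (by rwa [abs_of_nonneg (by linarith)] at hst)
  · simp [F, hc0]
  · simp [F, hmpos, hc0, hNpos.ne', -Nat.cast_mul, Nat.floor_natCast]
  · intro t ht
    set k := ⌊t * (N * m : ℕ)⌋₊ with hk
    have hP : (0 : ℝ) < (N * m : ℕ) := by push_cast; positivity
    have hk1 : (k : ℝ) ≤ t * (N * m : ℕ) := Nat.floor_le (mul_nonneg ht.1 hP.le)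
    have hk2 : t * (N * m : ℕ) < k + 1 := Nat.lt_floor_add_one _
    have h1 : ((k / m : ℕ) : ℝ) * m ≤ k := by exact_mod_cast Nat.div_mul_le_self k m
    have h2 : (k : ℝ) + 1 ≤ ((k / m : ℕ) + 1) * m := by
      have : k + 1 ≤ (k / m + 1) * m := by
        have h := Nat.mod_add_div k m
        have h' := Nat.mod_lt k hmpos
        rw [add_mul, mul_comm (k / m) m]; omega
      exact_mod_cast this
    push_cast at hk1 hk2
    have h3 : ((k / m : ℕ) : ℝ) ≤ t * N := by
      refine le_of_mul_le_mul_right ?_ hmR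
      linarith [mul_assoc t (N : ℝ) m]
    have h4 : t * N < (k / m : ℕ) + 1 := by
      refine lt_of_mul_lt_mul_right ?_ hmR.le
      linarith [mul_assoc t (N : ℝ) m]
    have hiN : k / m ≤ N := by
      have : ((k / m : ℕ) : ℝ) ≤ N := h3.trans (by nlinarith [ht.2])
      exact_mod_cast this
    have h5 : dist (f ((k / m : ℕ) / N)) (f t) < ε / 2 := by
      refine (hf _ (hgrid _ hiN) _ ht ?_).trans_le (min_le_right _ _)
      refine lt_trans ?_ hN
      rw [abs_sub_comm, abs_of_nonneg (by rw [sub_nonneg, div_le_iff₀ hNpos]; exact h3),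
        sub_lt_iff_lt_add, ← add_div, lt_div_iff₀ hNpos]
      linarith
    have h6 := hcb (k / m) (k % m)
    change dist (c (k / m) (k % m)) (f t) < ε
    linarith [dist_triangle (c (k / m) (k % m)) (f ((k / m : ℕ) / N)) (f t)]

/-- Iterating the refinement step: coarsely continuous functions into a locally connected
compactum are uniformly close to continuous ones with the same end points. -/
theorem Coarse.exists_continuousOn [CompactSpace A] [LocallyConnectedSpace A] {ε : ℝ}
    (hε : 0 < ε) :
    ∃ δ > 0, ∀ f : ℝ → A, Coarse δ f → ∃ g : ℝ → A, ContinuousOn g (Icc 0 1) ∧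
      g 0 = f 0 ∧ g 1 = f 1 ∧ ∀ t ∈ Icc (0 : ℝ) 1, dist (g t) (f t) ≤ ε := by
  have hstep := fun k : ℕ => Coarse.refine_step (A := A) (ε := ε / 2 / 2 ^ k) (by positivity)
  choose D hD hDle hDs using hstep
  refine ⟨D 0, hD 0, fun f hf => ?_⟩
  choose! nxt hn1 hn2 hn3 hn4 using fun k => hDs k (D (k + 1)) (hD (k + 1))
  let F : ℕ → ℝ → A := fun k => Nat.rec f (fun k g => nxt k g) k
  have hFc : ∀ k, Coarse (D k) (F k) := by
    intro k
    induction k with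
    | zero => exact hf
    | succ k ih => exact hn1 k _ ih
  have hF0 : ∀ k, F k 0 = f 0 := by
    intro k
    induction k with
    | zero => rfl
    | succ k ih => exact (hn2 k _ (hFc k)).trans ih
  have hF1 : ∀ k, F k 1 = f 1 := by
    intro k
    induction k with
    | zero => rfl
    | succ k ih => exact (hn3 k _ (hFc k)).trans ih
  have hFd : ∀ t ∈ Icc (0 : ℝ) 1, ∀ k, dist (F k t) (F (k + 1) t) ≤ ε / 2 / 2 ^ k := by
    intro t ht k
    rw [dist_comm]
    exact (hn4 k _ (hFc k) t ht).le
  have hlim : ∀ t, ∃ a, t ∈ Icc (0 : ℝ) 1 → Filter.Tendsto (fun k => F k t) Filter.atTop (𝓝 a) := by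
    intro t
    by_cases ht : t ∈ Icc (0 : ℝ) 1
    · obtain ⟨a, ha⟩ := cauchySeq_tendsto_of_complete (cauchySeq_of_le_geometric_two (hFd t ht))
      exact ⟨a, fun _ => ha⟩
    · exact ⟨f t, fun h => absurd h ht⟩
  choose g hg using hlim
  have hgd : ∀ t ∈ Icc (0 : ℝ) 1, ∀ k, dist (F k t) (g t) ≤ ε / 2 ^ k := fun t ht k =>
    dist_le_of_le_geometric_two_of_tendsto (hFd t ht) (hg t ht) k
  refine ⟨g, ?_, ?_, ?_, ?_⟩
  · rw [Metric.continuousOn_iff]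
    intro t ht ε' hε'
    obtain ⟨k, hk⟩ : ∃ k : ℕ, ε / 2 ^ k < ε' / 3 := by
      have : Filter.Tendsto (fun k : ℕ => ε / 2 ^ k) Filter.atTop (𝓝 0) :=
        tendsto_const_nhds.div_atTop (tendsto_pow_atTop_atTop_of_one_lt one_lt_two)
      exact (this.eventually_lt_const (by positivity)).exists
    obtain ⟨η, hη, hc⟩ := hFc k
    refine ⟨η, hη, fun s hs hst => ?_⟩
    have h1 := hc s hs t ht hst
    have h2 := hgd s hs k
    have h3 := hgd t ht k
    have h4 : D k ≤ ε / 2 ^ k := (hDle k).trans (by gcongr; linarith)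
    linarith [dist_triangle4 (g s) (F k s) (F k t) (g t), dist_comm (F k s) (g s)]
  · have := hg 0 (by simp)
    simp only [hF0] at this
    exact tendsto_nhds_unique this tendsto_const_nhds
  · have := hg 1 (by simp)
    simp only [hF1] at this
    exact tendsto_nhds_unique this tendsto_const_nhds
  · intro t ht
    have := hgd t ht 0
    rw [dist_comm]
    rwa [pow_zero, div_one] at this

end Paths

/-! ### Retractions onto the remainders -/

section Retraction

variable {X : Type*} [MetricSpace X] {L R : Set X} {e : ℝ → X}

/-- A curve converging to a locally connected compactum `L` is asymptotic to a curve in `L`. -/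
theorem exists_asymptotic_curve (hLc : IsCompact L) (hLne : L.Nonempty)
    (hLl : LocallyConnectedSpace L) (he : Continuous e)
    (hL : ∀ δ > 0, ∀ᶠ t in Filter.atTop, Metric.infDist (e t) L < δ) :
    ∃ (a : ℝ) (ρ : ℝ → L), ContinuousOn ρ (Ici a) ∧
      ∀ ε > 0, ∀ᶠ t in Filter.atTop, dist (ρ t : X) (e t) < ε := by
  classical
  have : CompactSpace L := isCompact_iff_compactSpace.1 hLc
  have hnear : ∀ x : X, ∃ y : L, dist x y = Metric.infDist x L := fun x => by
    obtain ⟨y, hy, h⟩ := hLc.exists_infDist_eq_dist hLne x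
    exact ⟨⟨y, hy⟩, h.symm⟩
  choose p hp using hnear
  let f : ℝ → L := fun t => p (e t)
  have hf : ∀ t, dist (f t : X) (e t) = Metric.infDist (e t) L := fun t => by
    rw [dist_comm]; exact hp _
  have hcoarse : ∀ δ > 0, ∀ᶠ n : ℕ in Filter.atTop, Coarse δ fun t => f (n + t) := by
    intro δ hδ
    obtain ⟨T, hT⟩ := Filter.eventually_atTop.1 (hL (δ / 4) (by positivity))
    filter_upwards [Filter.eventually_ge_atTop ⌈T⌉₊] with n hn
    have hTn : T ≤ n := Nat.ceil_le.1 hn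
    have huc := (isCompact_Icc (a := (0 : ℝ)) (b := 1)).uniformContinuousOn_of_continuous
      (f := fun t => e (n + t)) (by fun_prop)
    obtain ⟨η, hη, h⟩ := Metric.uniformContinuousOn_iff.1 huc (δ / 2) (by positivity)
    refine ⟨η, hη, fun s hs t ht hst => ?_⟩
    have h1 := h s hs t ht hst
    have h2 := hT (n + s) (by linarith [hs.1])
    have h3 := hT (n + t) (by linarith [ht.1])
    rw [← hf] at h2 h3
    rw [Subtype.dist_eq]
    linarith [dist_triangle4 (f (n + s) : X) (e (n + s)) (e (n + t)) (f (n + t)),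
      dist_comm (f (n + t) : X) (e (n + t))]
  let Q : ℕ → ℕ → Prop := fun n k => ∃ g : ℝ → L, ContinuousOn g (Icc 0 1) ∧
    g 0 = f n ∧ g 1 = f (n + 1) ∧ ∀ t ∈ Icc (0 : ℝ) 1, dist (g t) (f (n + t)) ≤ 1 / ((k : ℝ) + 1)
  have hQ : ∀ k, ∀ᶠ n in Filter.atTop, Q n k := by
    intro k
    obtain ⟨δ, hδ, h⟩ := Coarse.exists_continuousOn (A := L) (ε := 1 / ((k : ℝ) + 1))
      (by positivity)
    filter_upwards [hcoarse δ hδ] with n hn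
    obtain ⟨g, hg, h0, h1, hd⟩ := h _ hn
    exact ⟨g, hg, by simpa using h0, h1, hd⟩
  obtain ⟨n₀, hn₀⟩ := Filter.eventually_atTop.1 (hQ 0)
  -- for each `n` use (nearly) the best precision available on `[n, n + 1]`
  let κ : ℕ → ℕ := fun n => Nat.findGreatest (Q n) n
  have hκ : ∀ n ≥ n₀, Q n (κ n) := fun n hn =>
    Nat.findGreatest_spec (Nat.zero_le n) (hn₀ n hn)
  have hex : ∀ n, ∃ g : ℝ → L, n₀ ≤ n → ContinuousOn g (Icc 0 1) ∧
      g 0 = f n ∧ g 1 = f (n + 1) ∧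
      ∀ t ∈ Icc (0 : ℝ) 1, dist (g t) (f (n + t)) ≤ 1 / ((κ n : ℝ) + 1) := by
    intro n
    by_cases hn : n₀ ≤ n
    · obtain ⟨g, hg⟩ := hκ n hn
      exact ⟨g, fun _ => hg⟩
    · exact ⟨f, fun h => absurd h hn⟩
  choose g hg using hex
  let ρ : ℝ → L := fun t => g ⌊t⌋₊ (t - ⌊t⌋₊)
  have hρ : ∀ n ≥ n₀, ∀ t ∈ Icc (n : ℝ) (n + 1), ρ t = g n (t - n) := by
    intro n hn t ht
    rcases ht.2.lt_or_eq with h | h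
    · have : ⌊t⌋₊ = n := (Nat.floor_eq_iff ((Nat.cast_nonneg n).trans ht.1)).2 ⟨ht.1, h⟩
      simp only [ρ, this]
    · have h' : t = (n + 1 : ℕ) := by push_cast; exact h
      have : ⌊t⌋₊ = n + 1 := by rw [h', Nat.floor_natCast]
      simp only [ρ, this]
      rw [h', sub_self, (hg (n + 1) (by omega)).2.1]
      push_cast
      rw [add_sub_cancel_left, (hg n hn).2.2.1]
  have hρc : ∀ n ≥ n₀, ContinuousOn ρ (Icc (n : ℝ) (n + 1)) := by
    intro n hn
    refine ContinuousOn.congr ?_ (hρ n hn)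
    refine (hg n hn).1.comp (by fun_prop) fun t ht => ?_
    exact ⟨by linarith [ht.1], by linarith [ht.2]⟩
  have hρN : ∀ n ≥ n₀, ContinuousOn ρ (Icc (n₀ : ℝ) n) := by
    intro n hn
    induction n, hn using Nat.le_induction with
    | base => rw [Icc_self]; exact continuousOn_singleton _ _
    | succ n hn ih =>
      have hn' : (n₀ : ℝ) ≤ n := by exact_mod_cast hn
      push_cast
      rw [← Icc_union_Icc_eq_Icc hn' (by linarith : (n : ℝ) ≤ n + 1)]
      exact ih.union_of_isClosed (hρc n hn) isClosed_Icc isClosed_Icc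
  refine ⟨n₀, ρ, fun t ht => ?_, fun ε hε => ?_⟩
  · have ht' : (n₀ : ℝ) ≤ t := ht
    have hlt : t < (⌊t⌋₊ + 1 : ℕ) := by push_cast; exact Nat.lt_floor_add_one t
    have hle : n₀ ≤ ⌊t⌋₊ + 1 := by exact_mod_cast (ht'.trans hlt.le)
    refine (hρN _ hle t ⟨ht, hlt.le⟩).mono_of_mem_nhdsWithin ?_
    filter_upwards [self_mem_nhdsWithin, mem_nhdsWithin_of_mem_nhds (Iio_mem_nhds hlt)] with s h1 h2
    exact ⟨h1, le_of_lt h2⟩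
  · obtain ⟨k, hk⟩ := exists_nat_one_div_lt (half_pos hε)
    obtain ⟨T, hT⟩ := Filter.eventually_atTop.1 (hL (ε / 2) (by positivity))
    obtain ⟨n₁, hn₁⟩ := Filter.eventually_atTop.1 (hQ k)
    filter_upwards [Filter.eventually_ge_atTop T,
      Filter.eventually_ge_atTop ((max (max n₀ n₁) k : ℕ) : ℝ)] with t htT ht
    have h0 : (0 : ℝ) ≤ t := (Nat.cast_nonneg _).trans ht
    have hfl : max (max n₀ n₁) k ≤ ⌊t⌋₊ := Nat.le_floor ht
    have hkκ : k ≤ κ ⌊t⌋₊ := Nat.le_findGreatest (by omega) (hn₁ _ (by omega))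
    have h1 := (hg ⌊t⌋₊ (by omega)).2.2.2 (t - ⌊t⌋₊)
      ⟨by linarith [Nat.floor_le h0], by linarith [Nat.lt_floor_add_one t]⟩
    rw [add_sub_cancel, Subtype.dist_eq] at h1
    have h2 := hT t htT
    rw [← hf] at h2
    have h3 : 1 / ((κ ⌊t⌋₊ : ℝ) + 1) ≤ 1 / ((k : ℝ) + 1) := by gcongr
    change dist (g ⌊t⌋₊ (t - ⌊t⌋₊) : X) (e t) < ε
    linarith [dist_triangle (g ⌊t⌋₊ (t - ⌊t⌋₊) : X) (f t) (e t)]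

theorem isClosed_union_ray (hLc : IsCompact L) (he : Continuous e)
    (hL : ∀ U, IsOpen U → L ⊆ U → ∀ᶠ t in Filter.atTop, e t ∈ U) (a : ℝ) :
    IsClosed (L ∪ e '' Ici a) := by
  rw [← isOpen_compl_iff, isOpen_iff_mem_nhds]
  intro x hx
  have hxL : x ∉ L := fun h => hx (Or.inl h)
  obtain ⟨U, V, hU, hV, hLU, hxV, hUV⟩ := SeparatedNhds.of_isCompact_isCompact hLc
    (isCompact_singleton (x := x)) (disjoint_singleton_right.2 hxL)
  obtain ⟨T, hT⟩ := Filter.eventually_atTop.1 (hL U hU hLU)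
  have hK : IsClosed (e '' Icc a T) := (isCompact_Icc.image he).isClosed
  have hxK : x ∈ (e '' Icc a T)ᶜ := by
    rintro ⟨t, ht, rfl⟩
    exact hx (Or.inr ⟨t, ht.1, rfl⟩)
  filter_upwards [hV.mem_nhds (hxV rfl), hK.isOpen_compl.mem_nhds hxK] with y hyV hyK
  rintro (hy | ⟨t, ht, rfl⟩)
  · exact disjoint_left.1 hUV (hLU hy) hyV
  · rcases le_total t T with h | h
    · exact hyK ⟨t, ⟨ht, h⟩, rfl⟩
    · exact disjoint_left.1 hUV (hT t h) hyV

/-- If a line `e` joins `R` (at `-∞`) to a locally connected `L` (at `+∞`), then the space is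
retracted onto `L` by following on the line a curve in `L` asymptotic to it. -/
theorem exists_retraction (hLc : IsCompact L) (hLne : L.Nonempty) (hRc : IsCompact R)
    (hLl : LocallyConnectedSpace L) (he : IsOpenEmbedding e)
    (hcov : ∀ x, x ∈ L ∨ x ∈ range e ∨ x ∈ R) (hLR : Disjoint L R)
    (hLe : Disjoint L (range e)) (hRe : Disjoint R (range e))
    (hL : ∀ U, IsOpen U → L ⊆ U → ∀ᶠ t in Filter.atTop, e t ∈ U)
    (hR : ∀ U, IsOpen U → R ⊆ U → ∀ᶠ t in Filter.atBot, e t ∈ U) :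
    ∃ r : X → L, Continuous r ∧ ∀ x : L, r x = x := by
  classical
  obtain ⟨a, ρ, hρ, hρe⟩ := exists_asymptotic_curve hLc hLne hLl he.continuous (fun δ hδ => by
    refine hL {x | Metric.infDist x L < δ}
      (isOpen_lt (Metric.continuous_infDist_pt L) continuous_const) fun x hx => ?_
    change Metric.infDist x L < δ
    rwa [Metric.infDist_zero_of_mem hx])
  let σ : ℝ → L := fun t => ρ (max t a)
  have hσ : Continuous σ := hρ.comp_continuous (by fun_prop) fun t => mem_Ici.2 (le_max_right _ _)
  have hσe : ∀ ε > 0, ∀ᶠ t in Filter.atTop, dist (σ t : X) (e t) < ε := fun ε hε => by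
    filter_upwards [hρe ε hε, Filter.eventually_ge_atTop a] with t h1 h2
    simp only [σ, max_eq_left h2]; exact h1
  let τ : X → ℝ := fun x => if x ∈ range e then Function.invFun e x else a
  have hτe : ∀ t, τ (e t) = t := fun t => by
    simp only [τ, mem_range_self, if_true]
    exact Function.leftInverse_invFun he.injective t
  let r : X → L := fun x => if h : x ∈ L then ⟨x, h⟩ else σ (τ x)
  have hrL : ∀ x : L, r x = x := fun x => by simp only [r, x.2, dif_pos]
  have hre : ∀ t, r (e t) = σ t := fun t => by
    have : e t ∉ L := fun h => disjoint_left.1 hLe h (mem_range_self t)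
    simp only [r, this, dif_neg, not_false_iff, hτe]
  have hrR : ∀ x ∈ R, r x = σ a := fun x hx => by
    have h1 : x ∉ L := fun h => disjoint_left.1 hLR h hx
    have h2 : x ∉ range e := fun h => disjoint_left.1 hRe hx h
    simp only [r, h1, dif_neg, not_false_iff, τ, h2, if_false]
  refine ⟨r, ?_, hrL⟩
  rw [continuous_iff_continuousAt]
  intro x
  rcases hcov x with hx | ⟨t, rfl⟩ | hx
  · rw [Metric.continuousAt_iff']
    intro ε hε
    obtain ⟨T, hT⟩ := Filter.eventually_atTop.1 (hσe (ε / 2) (by positivity))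
    -- the complement of `L ∪ e(T, ∞)` is the closed set `R ∪ e(-∞, T]`
    have hcl : IsClosed (R ∪ (fun t => e (-t)) '' Ici (-T)) :=
      isClosed_union_ray hRc (he.continuous.comp continuous_neg)
        (fun U hU hRU => Filter.tendsto_neg_atTop_atBot.eventually (hR U hU hRU)) (-T)
    have hxc : x ∈ (R ∪ (fun t => e (-t)) '' Ici (-T))ᶜ := by
      rintro (h | ⟨s, -, h⟩)
      · exact disjoint_left.1 hLR hx h
      · exact disjoint_left.1 hLe hx ⟨-s, h⟩
    filter_upwards [hcl.isOpen_compl.mem_nhds hxc, Metric.ball_mem_nhds x (half_pos hε)]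
      with y hy hyx
    rw [Subtype.dist_eq, hrL ⟨x, hx⟩]
    rw [Metric.mem_ball] at hyx
    rcases hcov y with hyL | ⟨s, rfl⟩ | hyR
    · rw [hrL ⟨y, hyL⟩]; linarith
    · rw [hre]
      have hs : T ≤ s := by
        by_contra h
        exact hy (Or.inr ⟨-s, by simp only [mem_Ici]; linarith, by simp⟩)
      linarith [hT s hs, dist_triangle (σ s : X) (e s) x]
    · exact absurd (Or.inl hyR) hy
  · refine (he.continuousAt_iff (f := e) (g := r)).1 ?_
    have : r ∘ e = σ := funext hre
    rw [this]; exact hσ.continuousAt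
  · have hcl := isClosed_union_ray hLc he.continuous hL a
    have hxc : x ∈ (L ∪ e '' Ici a)ᶜ := by
      rintro (h | ⟨s, -, h⟩)
      · exact disjoint_left.1 hLR h hx
      · exact disjoint_left.1 hRe hx ⟨s, h⟩
    refine (continuousAt_const (y := σ a)).congr ?_
    filter_upwards [hcl.isOpen_compl.mem_nhds hxc] with y hy
    rcases hcov y with hyL | ⟨s, rfl⟩ | hyR
    · exact absurd (Or.inl hyL) hy
    · rw [hre]
      have hs : s < a := by
        by_contra h
        exact hy (Or.inr ⟨s, not_lt.1 h, rfl⟩)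
      simp only [σ, max_eq_right hs.le, max_self]
    · rw [hrR y hyR]

end Retraction

/-! ### The two ends of the free interval -/

section Ends

variable {X : Type*} [TopologicalSpace X] {L J R JL JR : Set X}

theorem nonempty_homeomorph_real {J : Set X} (h : Nonempty (J ≃ₜ Ioo (0 : ℝ) 1)) :
    Nonempty (ℝ ≃ₜ J) := by
  obtain ⟨h⟩ := h
  let φ : ℝ ≃ₜ ℝ := affineHomeomorph 2 (-1) two_ne_zero
  have hφ : Ioo (0 : ℝ) 1 = φ ⁻¹' Ioo (-1) 1 := by
    ext x
    simp only [mem_Ioo, mem_preimage, φ, affineHomeomorph_apply]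
    constructor <;> rintro ⟨h1, h2⟩ <;> constructor <;> linarith
  exact ⟨(orderIsoIooNegOneOne ℝ).toHomeomorph.trans ((φ.sets hφ).symm.trans h.symm)⟩

theorem ray_preconnected (e : ℝ ≃ₜ J) (hJL : JL ⊆ J) (hray : IsRaySet JL) :
    IsPreconnected {t | (e t : X) ∈ JL} := by
  obtain ⟨φ⟩ := hray
  have : PreconnectedSpace (Ici (0 : ℝ)) :=
    isPreconnected_iff_preconnectedSpace.1 isPreconnected_Ici
  have heq : {t | (e t : X) ∈ JL} =
      range fun s : Ici (0 : ℝ) => e.symm (inclusion hJL (φ.symm s)) := by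
    ext t
    constructor
    · intro ht
      refine ⟨φ ⟨_, ht⟩, ?_⟩
      simp [inclusion]
    · rintro ⟨s, rfl⟩
      simp [inclusion]
  rw [heq]
  exact isPreconnected_range (e.symm.continuous.comp
    ((continuous_inclusion hJL).comp φ.symm.continuous))

/-- The subray of `J` whose compactification adds the nonempty set `L` is not contained in a compact
part of `J`. -/
theorem ray_not_bounded [T2Space X] (e : ℝ ≃ₜ J) (hJL : JL ⊆ J) (hLJ : Disjoint L J)
    (hLne : L.Nonempty) (hc : IsCompact (L ∪ JL)) (hd : L ∪ JL ⊆ closure JL)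
    (ha : BddAbove {t | (e t : X) ∈ JL}) (hb : BddBelow {t | (e t : X) ∈ JL}) : False := by
  have hec : Continuous fun t => (e t : X) := continuous_subtype_val.comp e.continuous
  have hS : {t | (e t : X) ∈ JL} = (fun t => (e t : X)) ⁻¹' (L ∪ JL) := by
    ext t
    constructor
    · exact Or.inr
    · rintro (h | h)
      · exact absurd (e t).2 (disjoint_left.1 hLJ h)
      · exact h
  have hcl : IsClosed {t | (e t : X) ∈ JL} := hS ▸ hc.isClosed.preimage hec
  have hSc : IsCompact {t | (e t : X) ∈ JL} :=
    Metric.isCompact_of_isClosed_isBounded hcl (isBounded_iff_bddBelow_bddAbove.2 ⟨hb, ha⟩)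
  have him : (fun t => (e t : X)) '' {t | (e t : X) ∈ JL} = JL := by
    ext x
    constructor
    · rintro ⟨t, ht, rfl⟩; exact ht
    · intro hx
      exact ⟨e.symm ⟨x, hJL hx⟩, by simpa using hx, by simp⟩
  have hJLc : IsClosed JL := by
    rw [← him]; exact (hSc.image hec).isClosed
  obtain ⟨x, hx⟩ := hLne
  have : x ∈ JL := hJLc.closure_eq ▸ hd (Or.inl hx)
  exact disjoint_left.1 hLJ hx (hJL this)

/-- A terminal subray contained in `JL` converges to `L`, because the part of the compact set
`L ∪ JL` outside a neighbourhood of `L` is a compact subset of `J`. -/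
theorem tendsto_end [T2Space X] (e : ℝ ≃ₜ J) (hJL : JL ⊆ J)
    (hc : IsCompact (L ∪ JL)) {a : ℝ} (ha : Ici a ⊆ {t | (e t : X) ∈ JL}) :
    ∀ U, IsOpen U → L ⊆ U → ∀ᶠ t in Filter.atTop, (e t : X) ∈ U := by
  intro U hU hLU
  have hK : IsCompact ((L ∪ JL) \ U) := hc.diff hU
  have hKJ : (L ∪ JL) \ U ⊆ J := by
    rintro x ⟨hx | hx, hxU⟩
    · exact absurd (hLU hx) hxU
    · exact hJL hx
  have hpre : IsCompact (e ⁻¹' (Subtype.val ⁻¹' ((L ∪ JL) \ U))) := by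
    rw [e.isCompact_preimage]
    refine IsEmbedding.subtypeVal.isInducing.isCompact_preimage' hK ?_
    rwa [Subtype.range_coe]
  obtain ⟨B, hB⟩ := hpre.bddAbove
  filter_upwards [Filter.eventually_gt_atTop B, Filter.eventually_ge_atTop a] with t ht hta
  by_contra h
  exact absurd (hB (show t ∈ e ⁻¹' (Subtype.val ⁻¹' ((L ∪ JL) \ U)) from
    ⟨Or.inr (ha hta), h⟩)) (not_le.2 ht)

theorem exists_Ici_subset {S : Set ℝ} (hS : IsPreconnected S) (h : ¬ BddAbove S) :
    ∃ a, Ici a ⊆ S := by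
  rw [not_bddAbove_iff] at h
  obtain ⟨a, ha, -⟩ := h 0
  refine ⟨a, fun t ht => ?_⟩
  obtain ⟨b, hb, htb⟩ := h t
  exact hS.ordConnected.out ha hb ⟨ht, htb.le⟩

theorem neg_trans_mem (e : ℝ ≃ₜ J) (A : Set X) :
    {t | (((Homeomorph.neg ℝ).trans e) t : X) ∈ A} = -{t | (e t : X) ∈ A} := by
  ext t; simp

/-- The free interval can be parametrized by the line so that it tends to `L` at `+∞` and to `R`
at `-∞`. -/
theorem ClassC.exists_param [T2Space X] (hC : ClassC L J R) (hLR : Disjoint L R) :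
    ∃ e : ℝ ≃ₜ J, (∀ U, IsOpen U → L ⊆ U → ∀ᶠ t in Filter.atTop, (e t : X) ∈ U) ∧
      ∀ U, IsOpen U → R ⊆ U → ∀ᶠ t in Filter.atBot, (e t : X) ∈ U := by
  obtain ⟨JL, JR, hJ, hrL, hrR, hcL, hdL, hcR, hdR⟩ := hC.rays
  have hJL : JL ⊆ J := hJ ▸ subset_union_left
  have hJR : JR ⊆ J := hJ ▸ subset_union_right
  obtain ⟨x, hxR⟩ := hC.connR.nonempty
  -- otherwise `L ∪ JL` is closed and dense, hence contains `R`
  have hne : JL ≠ J := by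
    rintro rfl
    have h : x ∈ L ∪ JL := hcL.isClosed.closure_subset_iff.2 subset_union_right (hC.denseJ x)
    rcases h with h | h
    · exact disjoint_left.1 hLR h hxR
    · exact disjoint_left.1 hC.disjRJ hxR h
  have key : ∀ e : ℝ ≃ₜ J, ¬ BddAbove {t | (e t : X) ∈ JL} →
      ∃ e : ℝ ≃ₜ J, (∀ U, IsOpen U → L ⊆ U → ∀ᶠ t in Filter.atTop, (e t : X) ∈ U) ∧
      ∀ U, IsOpen U → R ⊆ U → ∀ᶠ t in Filter.atBot, (e t : X) ∈ U := by
    intro e hab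
    have hpre := ray_preconnected e hJL hrL
    have hbb : BddBelow {t | (e t : X) ∈ JL} := by
      by_contra hbb
      refine hne (hJL.antisymm fun y hy => ?_)
      obtain ⟨a, ha, hat⟩ := not_bddBelow_iff.1 hbb (e.symm ⟨y, hy⟩)
      obtain ⟨b, hb, hbt⟩ := not_bddAbove_iff.1 hab (e.symm ⟨y, hy⟩)
      have := hpre.ordConnected.out ha hb ⟨hat.le, hbt.le⟩
      simpa using this
    have hRb : ¬ BddBelow {t | (e t : X) ∈ JR} := by
      intro hRb
      obtain ⟨m, hm⟩ := hbb.union hRb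
      have h : m - 1 ∈ {t | (e t : X) ∈ JL} ∪ {t | (e t : X) ∈ JR} :=
        hJ.symm.subset (e (m - 1)).2
      linarith [hm h]
    obtain ⟨a, ha⟩ := exists_Ici_subset hpre hab
    have hRa : ¬ BddAbove {t | (((Homeomorph.neg ℝ).trans e) t : X) ∈ JR} := by
      rw [neg_trans_mem, bddAbove_neg]; exact hRb
    obtain ⟨b, hb⟩ := exists_Ici_subset
      (ray_preconnected ((Homeomorph.neg ℝ).trans e) hJR hrR) hRa
    refine ⟨e, tendsto_end e hJL hcL ha, fun U hU hRU => ?_⟩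
    have := Filter.tendsto_neg_atBot_atTop.eventually
      (tendsto_end ((Homeomorph.neg ℝ).trans e) hJR hcR hb U hU hRU)
    simpa using this
  obtain ⟨e⟩ := nonempty_homeomorph_real hC.freeJ
  by_cases hab : BddAbove {t | (e t : X) ∈ JL}
  · refine key ((Homeomorph.neg ℝ).trans e) ?_
    rw [neg_trans_mem, bddAbove_neg]
    exact fun hbb => ray_not_bounded e hJL hC.disjLJ hC.connL.nonempty hcL hdL hab hbb
  · exact key e hab

/-- A minimal map on a subset of a retract extends over the space by precomposition with the
retraction. -/
theorem mem_MSpace_of_retraction {L : Set X} {r : X → L} (hr : Continuous r)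
    (hrL : ∀ x : L, r x = x) {M : Set X} (hM : M ∈ MSetIn L) : M ∈ MSpace X := by
  obtain ⟨M', ⟨hMc, f, hf, hmin⟩, rfl⟩ := hM
  refine ⟨hMc.image continuous_subtype_val, fun x => (f (r x) : X),
    continuous_subtype_val.comp (hf.comp hr), ?_⟩
  exact hmin.image continuous_subtype_val Subtype.val_injective fun z => by rw [hrL]

end Ends

/-- If `X = L ∪ J ∪ R ∈ 𝒞`, `L, R` nondegenerate, `L ∩ R = ∅`, then
`𝓜(X) ⊇ 𝓜(J) ∪ 𝓜(L) ∪ 𝓜(R)`, and `𝓜(J)` is the system of all nonempty finite sets and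
Cantor sets contained in `J`. -/
theorem stmt4 {X : Type*} [TopologicalSpace X] [CompactSpace X] [ConnectedSpace X]
    [TopologicalSpace.MetrizableSpace X] {L J R : Set X} (hC : ClassC L J R)
    (hL : L.Nontrivial) (hR : R.Nontrivial) (hLR : Disjoint L R) :
    MSetIn J ∪ MSetIn L ∪ MSetIn R ⊆ MSpace X ∧
    MSetIn J = {M : Set X | M ⊆ J ∧ ((M.Finite ∧ M.Nonempty) ∨ IsCantorSet M)} := by
  let _ := TopologicalSpace.metrizableSpaceMetric X
  have hJ := nonempty_homeomorph_real hC.freeJ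
  have hext : ∀ M : Set X, M ⊆ J → ((M.Finite ∧ M.Nonempty) ∨ IsCantorSet M) →
      IsCompact M ∧ ∃ F : X → J, Continuous F ∧ MinimalSystemOn (fun x => (F x : X)) M := by
    intro M hMJ hM
    have hMc : IsCompact M := by
      rcases hM with h | h
      · exact h.1.isCompact
      · exact h.2.1
    have hMne : M.Nonempty := by
      rcases hM with h | h
      · exact h.2
      · exact h.1
    exact ⟨hMc, exists_extension_into hJ hMJ hMc (hasMinimalMap_coe hM) hMne⟩
  obtain ⟨e, heL, heR⟩ := hC.exists_param hLR
  have hemb : IsOpenEmbedding fun t => (e t : X) :=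
    hC.openJ.isOpenEmbedding_subtypeVal.comp e.isOpenEmbedding
  have hrange : range (fun t => (e t : X)) = J := by
    ext x
    constructor
    · rintro ⟨t, rfl⟩; exact (e t).2
    · intro hx; exact ⟨e.symm ⟨x, hx⟩, by simp⟩
  have hcov : ∀ x, x ∈ L ∨ x ∈ J ∨ x ∈ R := fun x => by
    have : x ∈ L ∪ J ∪ R := hC.union_eq ▸ mem_univ x
    rcases this with (h | h) | h
    · exact Or.inl h
    · exact Or.inr (Or.inl h)
    · exact Or.inr (Or.inr h)
  refine ⟨?_, ?_⟩
  · rintro M ((hM | hM) | hM)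
    · obtain ⟨hMJ, hM'⟩ := finite_or_cantor_of_mem_MSetIn hJ hM
      obtain ⟨hMc, F, hF, hmin⟩ := hext M hMJ hM'
      exact ⟨hMc, _, continuous_subtype_val.comp hF, hmin⟩
    · obtain ⟨r, hr, hrL⟩ := exists_retraction hC.compactL hL.nonempty hC.compactR hC.locConnL hemb
        (by rwa [hrange]) hLR (by rw [hrange]; exact hC.disjLJ) (by rw [hrange]; exact hC.disjRJ)
        heL heR
      exact mem_MSpace_of_retraction hr hrL hM
    · have hneg : range (fun t => (((Homeomorph.neg ℝ).trans e) t : X)) = J :=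
        ((Homeomorph.neg ℝ).surjective.range_comp fun t => (e t : X)).trans hrange
      obtain ⟨r, hr, hrR⟩ := exists_retraction (L := R) (R := L)
        (e := fun t => (((Homeomorph.neg ℝ).trans e) t : X))
        hC.compactR hR.nonempty hC.compactL hC.locConnR
        (hemb.comp (Homeomorph.neg ℝ).isOpenEmbedding)
        (fun x => by rw [hneg]; have := hcov x; tauto)
        hLR.symm (by rw [hneg]; exact hC.disjRJ) (by rw [hneg]; exact hC.disjLJ)
        (fun U hU h => Filter.tendsto_neg_atTop_atBot.eventually (heR U hU h))
        (fun U hU h => Filter.tendsto_neg_atBot_atTop.eventually (heL U hU h))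
      exact mem_MSpace_of_retraction hr hrR hM
  · refine subset_antisymm (fun M hM => finite_or_cantor_of_mem_MSetIn hJ hM) ?_
    rintro M ⟨hMJ, hM⟩
    obtain ⟨hMc, F, hF, hmin⟩ := hext M hMJ hM
    have hrec : Subtype.val '' (Subtype.val ⁻¹' M : Set J) = M := by
      rw [Subtype.image_preimage_coe, inter_eq_right.2 hMJ]
    refine ⟨Subtype.val ⁻¹' M, ⟨?_, fun z => F z, hF.comp continuous_subtype_val, ?_⟩, hrec.symm⟩
    · rw [IsEmbedding.subtypeVal.isCompact_iff, hrec]; exact hMc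
    · obtain ⟨hne, him, hm⟩ := hmin
      have himJ : Subtype.val '' ((fun z : J => F z) '' (Subtype.val ⁻¹' M)) = M := by
        rw [image_image]
        conv_rhs => rw [← him, ← hrec]
        rw [image_image]
      refine ⟨?_, ?_, fun N hNM hN hNc hNi => ?_⟩
      · rw [← hrec] at hne; exact hne.of_image
      · exact Subtype.val_injective.image_injective (himJ.trans hrec.symm)
      · have hMJc : IsCompact (Subtype.val ⁻¹' M : Set J) := by
          rw [IsEmbedding.subtypeVal.isCompact_iff, hrec]; exact hMc
        have hNcomp : IsCompact N := hMJc.of_isClosed_subset hNc hNM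
        refine Subtype.val_injective.image_injective (Eq.trans ?_ hrec.symm)
        refine hm _ ((image_mono hNM).trans hrec.subset) (hN.image _)
          (hNcomp.image continuous_subtype_val).isClosed ?_
        rintro _ ⟨_, ⟨z, hz, rfl⟩, rfl⟩
        exact ⟨F z, hNi ⟨z, hz, rfl⟩, rfl⟩
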